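/- For every n ≥ 1, the complex odd special orthogonal group SO_{2n+1}(ℂ) := {M ∈ GL_{2n+1}(ℂ) : Mᵀ M = 1 and det M = 1} is acceptable: for every finite group Γ and homomorphisms φ, φ' : Γ → SO_{2n+1}(ℂ) that are pointwise conjugate in SO_{2n+1}(ℂ), there exists g ∈ SO_{2n+1}(ℂ) conjugating φ to φ'. -/

import Mathlib

open Matrix

noncomputable section

/-- Membership in `SO_m(ℂ) = {M ∈ GL_m(ℂ) : Mᵀ M = 1 and det M = 1}`. -/
def memSO (m : ℕ) (g : Matrix (Fin m) (Fin m) ℂ) : Prop :=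
  gᵀ * g = 1 ∧ g.det = 1

/-!
Locally conjugate homomorphisms have equal traces, and over a field of characteristic zero the
trace determines a finite-dimensional semisimple module: if `Hom (V, W) = 0`, then by Jacobson
density some element of the algebra acts as `1` on `V` and as `0` on `W`, so equal traces force
`dim V = 0`; any nonzero map `V → W` splits off a common summand, and one inducts on the dimension.

An invertible matrix `g` intertwining two orthogonal representations is then corrected as in the
polar decomposition. The matrix `gᵀ * g` commutes with the first representation, and it has a square
root `p` in the algebra it generates; so `p` is symmetric and commutes with the first representation
as well, and `g * p⁻¹` is an orthogonal intertwiner. In odd size its determinant can be made `1` by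
a change of sign.
-/

section SemisimpleModules

variable {R M N : Type*} [Ring R] [AddCommGroup M] [Module R M] [IsSemisimpleModule R M]
  [AddCommGroup N] [Module R N]

theorem nonempty_prod_quotient_linearEquiv (P : Submodule R M) :
    Nonempty ((P × (M ⧸ P)) ≃ₗ[R] M) :=
  have ⟨Q, hPQ⟩ := exists_isCompl P
  ⟨((LinearEquiv.refl R P).prodCongr (P.quotientEquivOfIsCompl Q hPQ)).trans
    (P.prodEquivOfIsCompl Q hPQ)⟩

theorem exists_linearMap_ne_zero_symm [IsSemisimpleModule R N] {f : N →ₗ[R] M} (hf : f ≠ 0) :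
    ∃ g : M →ₗ[R] N, g ≠ 0 := by
  obtain ⟨s, hs⟩ := IsSemisimpleModule.lifting_property f.rangeRestrict
    f.surjective_rangeRestrict LinearMap.id
  obtain ⟨g, hg⟩ := IsSemisimpleModule.extension_property f.range.subtype
    f.range.injective_subtype s
  refine ⟨g, fun hg_zero ↦ hf ?_⟩
  have hs_zero : s = 0 := by rw [← hg, hg_zero, LinearMap.zero_comp]
  ext x
  simpa [hs_zero, eq_comm] using congr(($hs (f.rangeRestrict x) : M))

theorem isSemisimpleModule_prod [IsSemisimpleModule R N] : IsSemisimpleModule R (M × N) := by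
  have htop : IsSemisimpleModule R (⊤ : Submodule R (M × N)) := by
    rw [← LinearMap.sup_range_inl_inr]
    exact .sup (.range _) (.range _)
  exact .congr Submodule.topEquiv.symm

theorem exists_smul_eq_self_and_smul_eq_zero [IsSemisimpleModule R N]
    [Module.Finite (Module.End R (M × N)) (M × N)] (h : ∀ f : M →ₗ[R] N, f = 0) :
    ∃ r : R, (∀ x : M, r • x = x) ∧ ∀ y : N, r • y = 0 := by
  have h' (f : N →ₗ[R] M) : f = 0 := by
    by_contra hf
    obtain ⟨g, hg⟩ := exists_linearMap_ne_zero_symm hf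
    exact hg (h g)
  let projection : Module.End (Module.End R (M × N)) (M × N) :=
    { toFun z := (z.1, 0)
      map_add' _ _ := by simp
      map_smul' f z := by
        have hfst : (f (0, z.2)).1 = 0 :=
          congr($(h' (.fst R M N ∘ₗ f ∘ₗ .inr R M N)) z.2)
        have hsnd : (f (z.1, 0)).2 = 0 :=
          congr($(h (.snd R M N ∘ₗ f ∘ₗ .inl R M N)) z.1)
        have hz : f z = f (z.1, 0) + f (0, z.2) := by simp [← map_add]
        ext <;> simp [hz, hfst, hsnd] }
  have : IsSemisimpleModule R (M × N) := isSemisimpleModule_prod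
  obtain ⟨r, hr⟩ := Module.Finite.toModuleEnd_moduleEnd_surjective projection
  exact ⟨r, fun x ↦ congr(($hr (x, 0)).1), fun y ↦ congr(($hr (0, y)).2)⟩

end SemisimpleModules

section ModuleCharacter

variable {K A V W : Type*} [Field K] [Ring A] [Algebra K A]
  [AddCommGroup V] [Module K V] [Module A V] [IsScalarTower K A V]
  [AddCommGroup W] [Module K W] [Module A W] [IsScalarTower K A W]

variable (K V) in
/-- The character of an `A`-module `V` over a field `K`: the trace on `V` of the action of `a : A`.
It extends the character of a representation of `G` from `G` to the algebra `K[G]`. -/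
def moduleCharacter : A →ₗ[K] K :=
  LinearMap.trace K V ∘ₗ (Algebra.lsmul K K V).toLinearMap

theorem moduleCharacter_congr (e : V ≃ₗ[A] W) :
    moduleCharacter (A := A) K V = moduleCharacter K W := by
  ext a
  have hconj : (e.restrictScalars K).conj (Algebra.lsmul K K V a) = Algebra.lsmul K K W a := by
    ext w
    simp [LinearEquiv.conj_apply]
  simp [moduleCharacter, ← hconj]

variable [FiniteDimensional K V] [FiniteDimensional K W]

theorem moduleCharacter_prod :
    moduleCharacter (A := A) K (V × W) = moduleCharacter K V + moduleCharacter K W := by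
  ext a
  exact LinearMap.trace_prodMap' (Algebra.lsmul K K V a) (Algebra.lsmul K K W a)

theorem moduleCharacter_apply_one : moduleCharacter K V (1 : A) = Module.finrank K V := by
  simp [moduleCharacter]

theorem exists_linearMap_ne_zero_of_moduleCharacter_eq [CharZero K] [IsSemisimpleModule A V]
    [IsSemisimpleModule A W] [Nontrivial V]
    (h : moduleCharacter (A := A) K V = moduleCharacter K W) : ∃ f : V →ₗ[A] W, f ≠ 0 := by
  by_contra! hzero
  have : Module.Finite (Module.End A (V × W)) (V × W) := .of_restrictScalars_finite K _ _
  obtain ⟨a, haV, haW⟩ := exists_smul_eq_self_and_smul_eq_zero hzero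
  have hV : Algebra.lsmul K K V a = 1 := LinearMap.ext haV
  have hW : Algebra.lsmul K K W a = 0 := LinearMap.ext haW
  have htrace : (Module.finrank K V : K) = 0 := by
    simpa [moduleCharacter, hV, hW] using congr($h a)
  exact Module.finrank_pos.ne' (Nat.cast_eq_zero.mp htrace)

theorem nonempty_linearEquiv_of_moduleCharacter_eq [CharZero K] [IsSemisimpleModule A V]
    [IsSemisimpleModule A W] (h : moduleCharacter (A := A) K V = moduleCharacter K W) :
    Nonempty (V ≃ₗ[A] W) := by
  induction hd : Module.finrank K V using Nat.strong_induction_on generalizing V W with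
  | _ d ih =>
  subst hd
  rcases subsingleton_or_nontrivial V with _ | _
  · have hW : Module.finrank K W = 0 := by
      simpa [moduleCharacter_apply_one, Module.finrank_zero_of_subsingleton, eq_comm]
        using congr($h 1)
    have : Subsingleton W := Module.finrank_zero_iff.mp hW
    exact ⟨0⟩
  · obtain ⟨f, hf⟩ := exists_linearMap_ne_zero_of_moduleCharacter_eq h
    let I := f.range
    let e : (V ⧸ f.ker) ≃ₗ[A] I := f.quotKerEquivRange
    obtain ⟨eV⟩ := nonempty_prod_quotient_linearEquiv f.ker
    obtain ⟨eW⟩ := nonempty_prod_quotient_linearEquiv I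
    have : FiniteDimensional K f.ker :=
      inferInstanceAs (FiniteDimensional K (f.ker.restrictScalars K))
    have : FiniteDimensional K I := inferInstanceAs (FiniteDimensional K (I.restrictScalars K))
    have hker : moduleCharacter (A := A) K f.ker = moduleCharacter K (W ⧸ I) := by
      rw [← moduleCharacter_congr eV, ← moduleCharacter_congr eW, moduleCharacter_prod,
        moduleCharacter_prod, moduleCharacter_congr e, add_comm] at h
      exact add_left_cancel h
    have hlt : Module.finrank K f.ker < Module.finrank K V :=
      Submodule.finrank_lt (s := f.ker.restrictScalars K) (by simpa using hf)
    obtain ⟨e'⟩ := ih _ hlt hker rfl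
    exact ⟨eV.symm ≪≫ₗ e'.prodCongr e ≪≫ₗ .prodComm A _ _ ≪≫ₗ eW⟩

end ModuleCharacter

section CharacterOfRepresentation

open scoped MonoidAlgebra

variable {K G V W : Type*} [Field K] [Monoid G] [AddCommGroup V] [Module K V] [AddCommGroup W]
  [Module K W]

theorem moduleCharacter_asModule_single (ρ : Representation K G V) (g : G) :
    moduleCharacter K ρ.asModule (MonoidAlgebra.single g 1 : K[G]) = ρ.character g := by
  have hlsmul : Algebra.lsmul K K ρ.asModule (MonoidAlgebra.single g 1 : K[G]) = ρ g := by
    ext x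
    exact (Representation.single_smul ρ 1 g x).trans (one_smul K _)
  exact congr(LinearMap.trace K V $hlsmul)

theorem nonempty_representationEquiv_of_character_eq [CharZero K] [FiniteDimensional K V]
    [FiniteDimensional K W] (ρ : Representation K G V) (σ : Representation K G W)
    [hρ : ρ.IsSemisimpleRepresentation] [hσ : σ.IsSemisimpleRepresentation]
    (h : ρ.character = σ.character) : Nonempty (ρ.Equiv σ) := by
  rw [Representation.isSemisimpleRepresentation_iff_isSemisimpleModule_asModule] at hρ hσ
  have hchar : moduleCharacter (A := K[G]) K ρ.asModule = moduleCharacter K σ.asModule := by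
    ext g
    simpa [moduleCharacter_asModule_single] using congrFun h g
  obtain ⟨e⟩ := nonempty_linearEquiv_of_moduleCharacter_eq hchar
  let f := (Representation.IntertwiningMap.equivLinearMapAsModule ρ σ).symm e
  exact ⟨f.ofBijective e.bijective⟩

end CharacterOfRepresentation

section SquareRoots

open Polynomial

variable {K A : Type*} [Field K] [Ring A] [Algebra K A]

theorem not_isRoot_minpoly_zero {a : A} (ha : IsIntegral K a) (hunit : IsUnit a) :
    ¬ (minpoly K a).IsRoot 0 := by
  intro hroot
  obtain ⟨r, hr⟩ : X ∣ minpoly K a := by simpa using dvd_iff_isRoot.mpr hroot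
  have hr_zero : r ≠ 0 := by
    rintro rfl
    exact minpoly.ne_zero ha (by simpa using hr)
  have har : a * aeval a r = 0 := by simpa [hr] using minpoly.aeval K a
  have hdvd : X * r ∣ 1 * r := by
    rw [← hr, one_mul]
    exact minpoly.dvd K a (hunit.mul_right_eq_zero.mp har)
  exact not_isUnit_X (isUnit_of_dvd_one ((mul_dvd_mul_iff_right hr_zero).mp hdvd))

variable [IsAlgClosed K]

theorem exists_quadratic_eq_zero_of_ne_zero {a b : K} (c : K) (h : a ≠ 0 ∨ b ≠ 0) :
    ∃ x, a * x ^ 2 + b * x + c = 0 := by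
  have hdeg : (C a * X ^ 2 + C b * X + C c).degree ≠ 0 := by
    intro hdeg
    have hC := eq_C_of_degree_eq_zero hdeg
    have ha : a = 0 := by simpa [coeff_X, coeff_C] using congr(coeff $hC 2)
    have hb : b = 0 := by simpa [coeff_X, coeff_C] using congr(coeff $hC 1)
    exact h.elim (· ha) (· hb)
  simpa [IsRoot] using IsAlgClosed.exists_root _ hdeg

theorem exists_prod_X_sub_C_dvd_sq_sub_X [NeZero (2 : K)] (s : Multiset K) (hs : 0 ∉ s) :
    ∃ q : K[X], (s.map fun a ↦ X - C a).prod ∣ q ^ 2 - X := by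
  induction s using Multiset.induction_on with
  | empty => exact ⟨0, by simp⟩
  | cons a s ih =>
    rw [Multiset.mem_cons, not_or, eq_comm] at hs
    obtain ⟨q, r, hqr⟩ := ih hs.2
    set p := (s.map fun a ↦ X - C a).prod
    have hne : p.eval a ≠ 0 ∨ 2 * q.eval a ≠ 0 := by
      by_contra! hzero
      have hq : q.eval a = 0 := (mul_eq_zero.mp hzero.2).resolve_left two_ne_zero
      have ha : a = 0 := by simpa [hzero.1, hq] using congr(eval a $hqr)
      exact hs.1 ha
    -- `(q + p * C c) ^ 2 - X = p * (p * C c ^ 2 + 2 * q * C c + r)`; choose `c` so that the second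
    -- factor vanishes at `a`.
    obtain ⟨c, hc⟩ := exists_quadratic_eq_zero_of_ne_zero (r.eval a) hne
    obtain ⟨t, ht⟩ : X - C a ∣ p * C c ^ 2 + 2 * q * C c + r :=
      dvd_iff_isRoot.mpr (by simpa [IsRoot] using hc)
    refine ⟨q + p * C c, t, ?_⟩
    rw [Multiset.map_cons, Multiset.prod_cons]
    linear_combination hqr + p * ht

theorem exists_mem_adjoin_mul_self_eq [NeZero (2 : K)] {a : A} (ha : IsIntegral K a)
    (hunit : IsUnit a) : ∃ b ∈ Algebra.adjoin K {a}, b * b = a := by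
  obtain ⟨q, hq⟩ := exists_prod_X_sub_C_dvd_sq_sub_X (minpoly K a).roots
    fun h0 ↦ not_isRoot_minpoly_zero ha hunit (isRoot_of_mem_roots h0)
  rw [← (IsAlgClosed.splits _).eq_prod_roots_of_monic (minpoly.monic ha)] at hq
  refine ⟨aeval a q, aeval_mem_adjoin_singleton K a, ?_⟩
  simpa [sub_eq_zero, sq] using aeval_eq_zero_of_dvd_aeval_eq_zero hq (minpoly.aeval K a)

end SquareRoots

section Orthogonal

variable {K ι : Type*} [Fintype ι] [DecidableEq ι]

theorem isSymm_of_mem_adjoin [CommRing K] {s p : Matrix ι ι K} (hs : s.IsSymm)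
    (hp : p ∈ Algebra.adjoin K {s}) : p.IsSymm := by
  obtain ⟨q, rfl⟩ := Algebra.adjoin_singleton_eq_range_aeval K s ▸ hp
  change (Polynomial.aeval s q)ᵀ = Polynomial.aeval s q
  simp [Polynomial.aeval_eq_sum_range, transpose_sum, transpose_pow, hs.eq]

theorem semiconjBy_transpose [CommRing K] {g a b : Matrix ι ι K} (ha : aᵀ * a = 1)
    (hb : bᵀ * b = 1) (h : SemiconjBy g a b) : SemiconjBy gᵀ b a :=
  calc gᵀ * b = a * aᵀ * gᵀ * b := by rw [mul_eq_one_comm.mp ha, one_mul]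
    _ = a * (g * a)ᵀ * b := by rw [transpose_mul, Matrix.mul_assoc a]
    _ = a * gᵀ * (bᵀ * b) := by rw [h.eq, transpose_mul]; simp only [Matrix.mul_assoc]
    _ = a * gᵀ := by rw [hb, mul_one]

theorem eq_mul_mul_inv_of_semiconjBy [CommRing K] {g a b : Matrix ι ι K} (hg : IsUnit g.det)
    (h : SemiconjBy g a b) : b = g * a * g⁻¹ := by
  rw [h.eq, mul_nonsing_inv_cancel_right _ _ hg]

theorem exists_orthogonal_mul_mem_adjoin [Field K] [IsAlgClosed K] [NeZero (2 : K)]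
    {g : Matrix ι ι K} (hg : IsUnit g) :
    ∃ h p : Matrix ι ι K, hᵀ * h = 1 ∧ IsUnit p ∧ p ∈ Algebra.adjoin K {gᵀ * g} ∧ h * p = g := by
  have hS : IsUnit (gᵀ * g) := ((isUnit_transpose g).mpr hg).mul hg
  obtain ⟨p, hp, hpp⟩ := exists_mem_adjoin_mul_self_eq (Algebra.IsIntegral.isIntegral (R := K) _) hS
  have hpt : pᵀ = p := isSymm_of_mem_adjoin (isSymm_transpose_mul_self g) hp
  have hpu : IsUnit p := (Commute.refl p).isUnit_mul_iff.mp (hpp ▸ hS) |>.1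
  have hpdet : IsUnit p.det := (isUnit_iff_isUnit_det p).mp hpu
  refine ⟨g * p⁻¹, p, ?_, hpu, hp, nonsing_inv_mul_cancel_right p g hpdet⟩
  calc (g * p⁻¹)ᵀ * (g * p⁻¹) = p⁻¹ * (gᵀ * g) * p⁻¹ := by
        rw [transpose_mul, transpose_nonsing_inv, hpt]; simp only [Matrix.mul_assoc]
    _ = (p⁻¹ * p) * (p * p⁻¹) := by rw [← hpp]; simp only [Matrix.mul_assoc]
    _ = 1 := by rw [nonsing_inv_mul p hpdet, mul_nonsing_inv p hpdet, one_mul]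

theorem exists_orthogonal_semiconjBy [Field K] [IsAlgClosed K] [NeZero (2 : K)] {Γ : Type*}
    {φ φ' : Γ → Matrix ι ι K} (hφ : ∀ γ, (φ γ)ᵀ * φ γ = 1) (hφ' : ∀ γ, (φ' γ)ᵀ * φ' γ = 1)
    {g : Matrix ι ι K} (hg : IsUnit g) (h : ∀ γ, SemiconjBy g (φ γ) (φ' γ)) :
    ∃ k : Matrix ι ι K, kᵀ * k = 1 ∧ ∀ γ, SemiconjBy k (φ γ) (φ' γ) := by
  obtain ⟨k, p, hk, hpu, hp, rfl⟩ := exists_orthogonal_mul_mem_adjoin hg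
  refine ⟨k, hk, fun γ ↦ hpu.mul_right_cancel ?_⟩
  have hcomm : Commute ((k * p)ᵀ * (k * p)) (φ γ) :=
    (semiconjBy_transpose (hφ γ) (hφ' γ) (h γ)).mul_left (h γ)
  have hpφ : Commute (φ γ) p := Algebra.commute_of_mem_adjoin_singleton_of_commute hp hcomm.symm
  calc k * φ γ * p = k * p * φ γ := by rw [mul_assoc, hpφ.eq, mul_assoc]
    _ = φ' γ * k * p := by rw [(h γ).eq, mul_assoc]

theorem exists_det_eq_one_of_orthogonal_semiconjBy [CommRing K] [IsDomain K]
    (hι : Odd (Fintype.card ι)) {Γ : Type*} {φ φ' : Γ → Matrix ι ι K} {k : Matrix ι ι K}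
    (hk : kᵀ * k = 1) (h : ∀ γ, SemiconjBy k (φ γ) (φ' γ)) :
    ∃ g : Matrix ι ι K, (gᵀ * g = 1 ∧ g.det = 1) ∧ ∀ γ, SemiconjBy g (φ γ) (φ' γ) := by
  have hdet : k.det * k.det = 1 := by simpa using congr(det $hk)
  rcases mul_self_eq_one_iff.mp hdet with hpos | hneg
  · exact ⟨k, ⟨hk, hpos⟩, h⟩
  · exact ⟨-k, ⟨by simpa using hk, by simp [det_neg, hneg, hι.neg_one_pow]⟩,
      fun γ ↦ (h γ).neg_left⟩

end Orthogonal

section MatrixRepresentations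

variable {K ι Γ : Type*} [Field K] [Fintype ι] [DecidableEq ι] [Monoid Γ]

/-- The representation on column vectors attached to a homomorphism into square matrices. -/
def matrixRepresentation (φ : Γ →* Matrix ι ι K) : Representation K Γ (ι → K) :=
  (toLinAlgEquiv' : Matrix ι ι K ≃ₐ[K] _).toMonoidHom.comp φ

theorem matrixRepresentation_apply (φ : Γ →* Matrix ι ι K) (γ : Γ) :
    matrixRepresentation φ γ = toLin' (φ γ) :=
  rfl

theorem character_matrixRepresentation (φ : Γ →* Matrix ι ι K) (γ : Γ) :
    (matrixRepresentation φ).character γ = (φ γ).trace :=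
  trace_toLin'_eq (φ γ)

theorem exists_isUnit_semiconjBy_of_trace_eq [CharZero K] (φ φ' : Γ →* Matrix ι ι K)
    [(matrixRepresentation φ).IsSemisimpleRepresentation]
    [(matrixRepresentation φ').IsSemisimpleRepresentation]
    (htr : ∀ γ, (φ γ).trace = (φ' γ).trace) :
    ∃ g : Matrix ι ι K, IsUnit g ∧ ∀ γ, SemiconjBy g (φ γ) (φ' γ) := by
  obtain ⟨e⟩ := nonempty_representationEquiv_of_character_eq
    (matrixRepresentation φ) (matrixRepresentation φ')
    (funext fun γ ↦ by simpa only [character_matrixRepresentation] using htr γ)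
  refine ⟨LinearMap.toMatrix' e.toLinearMap, ?_, fun γ ↦ toLin'.injective ?_⟩
  · rw [isUnit_iff_isUnit_det, LinearMap.det_toMatrix']
    exact e.toLinearEquiv.isUnit_det'
  · simpa [toLin'_mul, matrixRepresentation_apply] using e.isIntertwining' γ

end MatrixRepresentations

theorem statement12_general {K ι Γ : Type*} [Field K] [IsAlgClosed K] [CharZero K] [Fintype ι]
    [DecidableEq ι] [Monoid Γ] (hι : Odd (Fintype.card ι)) (φ φ' : Γ →* Matrix ι ι K)
    [(matrixRepresentation φ).IsSemisimpleRepresentation]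
    [(matrixRepresentation φ').IsSemisimpleRepresentation]
    (hφ : ∀ γ, (φ γ)ᵀ * φ γ = 1) (hφ' : ∀ γ, (φ' γ)ᵀ * φ' γ = 1)
    (htr : ∀ γ, (φ γ).trace = (φ' γ).trace) :
    ∃ g : Matrix ι ι K, (gᵀ * g = 1 ∧ g.det = 1) ∧ ∀ γ, φ' γ = g * φ γ * g⁻¹ := by
  obtain ⟨e, he, heφ⟩ := exists_isUnit_semiconjBy_of_trace_eq φ φ' htr
  obtain ⟨k, hk, hkφ⟩ := exists_orthogonal_semiconjBy hφ hφ' he heφ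
  obtain ⟨g, hg, hgφ⟩ := exists_det_eq_one_of_orthogonal_semiconjBy hι hk hkφ
  exact ⟨g, hg, fun γ ↦ eq_mul_mul_inv_of_semiconjBy (by simp [hg.2]) (hgφ γ)⟩

/-- For every `n ≥ 1`, the complex odd special orthogonal group `SO_{2n+1}(ℂ)` is
acceptable: any two pointwise (locally) conjugate homomorphisms from a finite group into
`SO_{2n+1}(ℂ)` are globally conjugate.  (Group homomorphisms into `SO_{2n+1}(ℂ)` are
encoded as monoid homomorphisms into the multiplicative monoid of matrices landing in
`SO_{2n+1}(ℂ)`.) -/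
theorem statement12 (n : ℕ) (hn : 1 ≤ n) (Γ : Type) [Group Γ] [Finite Γ]
    (φ φ' : Γ →* Matrix (Fin (2 * n + 1)) (Fin (2 * n + 1)) ℂ)
    (hφ : ∀ γ, memSO (2 * n + 1) (φ γ)) (hφ' : ∀ γ, memSO (2 * n + 1) (φ' γ))
    (hloc : ∀ γ : Γ, ∃ g : Matrix (Fin (2 * n + 1)) (Fin (2 * n + 1)) ℂ,
      memSO (2 * n + 1) g ∧ φ' γ = g * φ γ * g⁻¹) :
    ∃ g : Matrix (Fin (2 * n + 1)) (Fin (2 * n + 1)) ℂ,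
      memSO (2 * n + 1) g ∧ ∀ γ : Γ, φ' γ = g * φ γ * g⁻¹ := by
  have htr (γ : Γ) : (φ γ).trace = (φ' γ).trace := by
    obtain ⟨g, hg, hconj⟩ := hloc γ
    rw [hconj, trace_conj ((isUnit_iff_isUnit_det g).mpr (by simp [hg.2]))]
  -- Semisimplicity of the two representations is Maschke's theorem, supplied by an instance.
  exact statement12_general (by simp) φ φ' (fun γ ↦ (hφ γ).1) (fun γ ↦ (hφ' γ).1) htr

end
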